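/- arXiv:1701.07601 — 2 statements merged into one kernel-verified Lean document; each statement's English description precedes it below -/
import Mathlib

section
/- Let Fl ⊣ Fr be an adjunction inducing the monad T = Fr ∘ Fl on 𝒜, let (A, α) be a projective T-algebra with algebra-homomorphism section ᾱ : A ⟶ T A (ᾱ ∘ α = μ_A ∘ T ᾱ, α ∘ ᾱ = id_A), and let φ := ε_{Fl A} ∘ Fl ᾱ : Fl A ⟶ Fl A be the adjunction transpose of ᾱ. Suppose φ splits in ℬ as φ = i ∘ q with q : Fl A ⟶ B, i : B ⟶ Fl A, and q ∘ i = id_B. Then the adjunction transpose q' := Fr q ∘ η_A : A ⟶ Fr B of q is an isomorphism, with inverse α ∘ Fr i : Fr B ⟶ A. -/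
open CategoryTheory

/-!
The endomorphism `Fr φ` of `T A` is split in two ways: through `Fr B`, by `Fr i ∘ Fr q`, and through
`A`, by `ᾱ ∘ α`, because `ᾱ` is an algebra homomorphism. Two splittings of the same idempotent are
canonically isomorphic, by `Fr q ∘ ᾱ : A ⟶ Fr B` with inverse `α ∘ Fr i`. Finally `q ∘ φ = q`
transposes to `Fr q ∘ ᾱ = Fr q ∘ η_A`.
-/

/-- The canonical isomorphism between two splittings of the same idempotent of `Z`. A splitting is
encoded as a `Retract` of `Z`, the idempotent being `h.r ≫ h.i`. -/
def splittingIso {C : Type*} [Category C] {X Y Z : C} (h : Retract X Z) (k : Retract Y Z)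
    (idem_eq : h.r ≫ h.i = k.r ≫ k.i) : X ≅ Y where
  hom := h.i ≫ k.r
  inv := k.i ≫ h.r
  hom_inv_id := calc
    (h.i ≫ k.r) ≫ k.i ≫ h.r = h.i ≫ (k.r ≫ k.i) ≫ h.r := by simp only [Category.assoc]
    _ = 𝟙 X := by simp [← idem_eq]
  inv_hom_id := calc
    (k.i ≫ h.r) ≫ h.i ≫ k.r = k.i ≫ (h.r ≫ h.i) ≫ k.r := by simp only [Category.assoc]
    _ = 𝟙 Y := by simp [idem_eq]

theorem unit_comp_map_eq_comp_map_iff {A B : Type*} [Category A] [Category B]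
    {Fl : A ⥤ B} {Fr : B ⥤ A} (adj : Fl ⊣ Fr) {X : A} {Y Z : B}
    (f : Fl.obj X ⟶ Z) (s : X ⟶ Fr.obj Y) (g : Y ⟶ Z) :
    adj.unit.app X ≫ Fr.map f = s ≫ Fr.map g ↔ f = (Fl.map s ≫ adj.counit.app Y) ≫ g := by
  refine (adj.unit_comp_map_eq_iff f (s ≫ Fr.map g)).trans ?_
  rw [Fl.map_comp, Category.assoc, adj.counit_naturality, Category.assoc]

/-- Let `Fl ⊣ Fr` induce the monad `T = Fr ∘ Fl`, let `(A, α)` be a projective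
`T`-algebra with algebra-homomorphism section `ᾱ`, and let `φ := ε_{Fl A} ∘ Fl ᾱ` be the
transpose of `ᾱ`. If `φ` splits as `φ = i ∘ q` with `q ∘ i = id_B`, then the transpose
`q' := Fr q ∘ η_A : A ⟶ Fr B` of `q` is an isomorphism with inverse `α ∘ Fr i`. -/
theorem transpose_of_splitting_is_iso {A B : Type*} [Category A] [Category B]
    {Fl : A ⥤ B} {Fr : B ⥤ A} (adj : Fl ⊣ Fr)
    (X : (Adjunction.toMonad adj).Algebra)
    (abar : X.A ⟶ (Adjunction.toMonad adj).obj X.A)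
    (habar : X.a ≫ abar =
      (Adjunction.toMonad adj).map abar ≫ (Adjunction.toMonad adj).μ.app X.A)
    (hsec : abar ≫ X.a = 𝟙 X.A)
    {Bo : B} (q : Fl.obj X.A ⟶ Bo) (i : Bo ⟶ Fl.obj X.A)
    (hsplit : q ≫ i = Fl.map abar ≫ adj.counit.app (Fl.obj X.A))
    (hqi : i ≫ q = 𝟙 Bo) :
    (adj.unit.app X.A ≫ Fr.map q) ≫ (Fr.map i ≫ X.a) = 𝟙 X.A ∧
    (Fr.map i ≫ X.a) ≫ (adj.unit.app X.A ≫ Fr.map q) = 𝟙 (Fr.obj Bo) := by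
  let h : Retract X.A (Fr.obj (Fl.obj X.A)) := ⟨abar, X.a, hsec⟩
  let k : Retract Bo (Fl.obj X.A) := ⟨i, q, hqi⟩
  have split : k.r ≫ k.i = Fl.map h.i ≫ adj.counit.app (Fl.obj X.A) := hsplit
  have idem_eq : h.r ≫ h.i = Fr.map k.r ≫ Fr.map k.i := calc
    h.r ≫ h.i = Fr.map (Fl.map h.i) ≫ Fr.map (adj.counit.app (Fl.obj X.A)) := habar
    _ = Fr.map k.r ≫ Fr.map k.i := by rw [← Fr.map_comp, ← Fr.map_comp, split]
  let e : X.A ≅ Fr.obj Bo := splittingIso h (k.map Fr) idem_eq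
  have transpose_eq : adj.unit.app X.A ≫ Fr.map q = e.hom := by
    refine (unit_comp_map_eq_comp_map_iff adj k.r h.i k.r).mpr ?_
    rw [← split, Category.assoc, k.retract, Category.comp_id]
  rw [transpose_eq]
  exact ⟨e.hom_inv_id, e.inv_hom_id⟩
end

section
/- Let Fl ⊣ Fr be an adjunction inducing the monad T = Fr ∘ Fl on 𝒜 and comonad S = Fl ∘ Fr on ℬ, and let (B, β) be an S-coalgebra. Then: (i) β ∘ ε_B : S B ⟶ S B is idempotent; (ii) Fr(β ∘ ε_B) : T(Fr B) ⟶ T(Fr B) splits through Fr B, namely Fr β ∘ Fr ε_B = Fr(β ∘ ε_B) and Fr ε_B ∘ Fr β = id_{Fr B} (note Fl(Fr B) = S B, so T(Fr B) = Fr(S B)); (iii) for any S-coalgebra homomorphism g : (B, β) ⟶ (D, β_D), the morphism Fr g is consistent, i.e. (β_D ∘ ε_D) ∘ Fl(Fr g) = Fl(Fr g) ∘ (β ∘ ε_B). Hence the assignment (B, β) ↦ (Fr B, β ∘ ε_B), g ↦ Fr g defines a functor from S-coalgebras to the category Karm(F) of projective T-algebras with consistent morphisms. -/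
open CategoryTheory

universe v₁ v₂ u₁ u₂

variable {A : Type u₁} [Category.{v₁} A] {B : Type u₂} [Category.{v₂} B]

/-- Objects of the category `Karm(F)`: pairs `(X, φ)` with `φ : Fl X ⟶ Fl X` idempotent
such that `Fr φ : T X ⟶ T X` splits through `X`. -/
structure KarmObj (Fl : A ⥤ B) (Fr : B ⥤ A) where
  X : A
  φ : Fl.obj X ⟶ Fl.obj X
  idem : φ ≫ φ = φ
  splits : ∃ (p : Fr.obj (Fl.obj X) ⟶ X) (s : X ⟶ Fr.obj (Fl.obj X)),
    p ≫ s = Fr.map φ ∧ s ≫ p = 𝟙 X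

/-- The category `Karm(F)` of projective `T`-algebras with consistent morphisms. -/
instance karmCategory (Fl : A ⥤ B) (Fr : B ⥤ A) : Category (KarmObj Fl Fr) where
  Hom P Q := { f : P.X ⟶ Q.X // Fl.map f ≫ Q.φ = P.φ ≫ Fl.map f }
  id P := ⟨𝟙 P.X, by simp⟩
  comp {P Q R} f g := ⟨f.1 ≫ g.1, by
    rw [Fl.map_comp, Category.assoc, g.2, ← Category.assoc, f.2, Category.assoc]⟩
  id_comp f := Subtype.ext (Category.id_comp _)
  comp_id f := Subtype.ext (Category.comp_id _)
  assoc f g h := Subtype.ext (Category.assoc _ _ _)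

/-!
The counit law `β ≫ ε_B = 𝟙` exhibits `B` as a retract of `S B`, naturally in the coalgebra
`(B, β)`: the forgetful functor `U` is a retract of `U ⋙ Fr ⋙ Fl`. For any such natural retract, the
retraction followed by the section is an idempotent, its image under `Fr` splits because functors
preserve retracts, and consistency of `Fr (U g)` is the naturality of this idempotent.
-/

universe v₃ u₃

section Retract

theorem retract_r_comp_i_idem {X Y : B} (h : Retract X Y) :
    (h.r ≫ h.i) ≫ (h.r ≫ h.i) = h.r ≫ h.i := by
  simp

variable {Fl : A ⥤ B} {Fr : B ⥤ A}

/-- The object `(Fr Y, i ∘ r)` of `Karm(F)` attached to a retraction `r : Fl (Fr Y) ⟶ Y` with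
section `i`. -/
def karmObjOfRetract {Y : B} (h : Retract Y (Fl.obj (Fr.obj Y))) : KarmObj Fl Fr where
  X := Fr.obj Y
  φ := h.r ≫ h.i
  idem := retract_r_comp_i_idem h
  splits := ⟨Fr.map h.r, Fr.map h.i, (Fr.map_comp _ _).symm, (h.map Fr).retract⟩

variable {C : Type u₃} [Category.{v₃} C] {U : C ⥤ B}

/-- The component at `c` of a retraction of `U ⋙ Fr ⋙ Fl` onto `U`, typed so that its ambient object
is `Fl (Fr (U c))`. -/
abbrev retractApp (h : Retract U (U ⋙ Fr ⋙ Fl)) (c : C) :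
    Retract (U.obj c) (Fl.obj (Fr.obj (U.obj c))) :=
  h.map ((evaluation C B).obj c)

theorem map_consistent_of_retract (h : Retract U (U ⋙ Fr ⋙ Fl)) {c d : C} (g : c ⟶ d) :
    Fl.map (Fr.map (U.map g)) ≫ (h.r.app d ≫ h.i.app d) =
      (h.r.app c ≫ h.i.app c) ≫ Fl.map (Fr.map (U.map g)) :=
  (h.r ≫ h.i).naturality g

/-- The functor `c ↦ (Fr (U c), i_c ∘ r_c)`, `g ↦ Fr (U g)` to `Karm(F)` attached to a natural
retraction `r : U ⋙ Fr ⋙ Fl ⟶ U` with section `i`. -/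
def karmFunctorOfRetract (h : Retract U (U ⋙ Fr ⋙ Fl)) : C ⥤ KarmObj Fl Fr where
  obj c := karmObjOfRetract (retractApp h c)
  map g := ⟨Fr.map (U.map g), map_consistent_of_retract h g⟩
  map_id c := Subtype.ext ((U ⋙ Fr).map_id c)
  map_comp f g := Subtype.ext ((U ⋙ Fr).map_comp f g)

end Retract

/-- The forgetful functor of the coalgebras of a comonad `G`, as a retract of its composite with
`G`: the section consists of the structure maps and the retraction of the counits. -/
def coalgebraForgetRetract (G : Comonad B) : Retract G.forget (G.forget ⋙ G.toFunctor) where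
  i := { app := fun X => X.a, naturality := fun _ _ g => g.h.symm }
  r := Functor.whiskerLeft G.forget G.ε
  retract := by
    ext X
    exact X.counit

theorem coalgebras_to_karm_functor_general {C : Type u₃} [Category.{v₃} C] {Fl : A ⥤ B}
    {Fr : B ⥤ A} {U : C ⥤ B} (h : Retract U (U ⋙ Fr ⋙ Fl)) :
    (∀ c : C, (h.r.app c ≫ h.i.app c) ≫ (h.r.app c ≫ h.i.app c) = h.r.app c ≫ h.i.app c) ∧
    (∀ c : C,
        Fr.map (h.r.app c) ≫ Fr.map (h.i.app c) = Fr.map (h.r.app c ≫ h.i.app c) ∧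
          Fr.map (h.i.app c) ≫ Fr.map (h.r.app c) = 𝟙 (Fr.obj (U.obj c))) ∧
    (∀ (c d : C) (g : c ⟶ d),
        Fl.map (Fr.map (U.map g)) ≫ (h.r.app d ≫ h.i.app d) =
          (h.r.app c ≫ h.i.app c) ≫ Fl.map (Fr.map (U.map g))) ∧
    (∃ R : C ⥤ KarmObj Fl Fr,
        (∀ c, (R.obj c).X = Fr.obj (U.obj c) ∧ HEq (R.obj c).φ (h.r.app c ≫ h.i.app c)) ∧
        (∀ (c d : C) (g : c ⟶ d), HEq (R.map g).1 (Fr.map (U.map g)))) :=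
  ⟨fun c => retract_r_comp_i_idem (retractApp h c),
    fun c => ⟨(Fr.map_comp _ _).symm, ((retractApp h c).map Fr).retract⟩,
    fun _ _ g => map_consistent_of_retract h g,
    karmFunctorOfRetract h, fun _ => ⟨rfl, HEq.rfl⟩, fun _ _ _ => HEq.rfl⟩

/-- For an adjunction `Fl ⊣ Fr` inducing the monad `T = Fr ∘ Fl` and the
comonad `S = Fl ∘ Fr`, and any `S`-coalgebra `(B, β)`:
(i) `β ∘ ε_B` is idempotent on `S B`;
(ii) `Fr(β ∘ ε_B)` splits through `Fr B`, via `Fr β ∘ Fr ε_B = Fr(β ∘ ε_B)` and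
`Fr ε_B ∘ Fr β = id`;
(iii) for any coalgebra homomorphism `g`, `Fr g` is consistent.
Hence `(B, β) ↦ (Fr B, β ∘ ε_B)`, `g ↦ Fr g` defines a functor from `S`-coalgebras
to `Karm(F)`. -/
theorem coalgebras_to_karm_functor {Fl : A ⥤ B} {Fr : B ⥤ A} (adj : Fl ⊣ Fr) :
    (∀ Bc : (Adjunction.toComonad adj).Coalgebra,
        (adj.counit.app Bc.A ≫ Bc.a) ≫ (adj.counit.app Bc.A ≫ Bc.a) =
          adj.counit.app Bc.A ≫ Bc.a) ∧
    (∀ Bc : (Adjunction.toComonad adj).Coalgebra,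
        Fr.map (adj.counit.app Bc.A) ≫ Fr.map Bc.a =
            Fr.map (adj.counit.app Bc.A ≫ Bc.a) ∧
          Fr.map Bc.a ≫ Fr.map (adj.counit.app Bc.A) = 𝟙 (Fr.obj Bc.A)) ∧
    (∀ (Bc Dc : (Adjunction.toComonad adj).Coalgebra) (g : Bc ⟶ Dc),
        Fl.map (Fr.map g.f) ≫ (adj.counit.app Dc.A ≫ Dc.a) =
          (adj.counit.app Bc.A ≫ Bc.a) ≫ Fl.map (Fr.map g.f)) ∧
    (∃ R : (Adjunction.toComonad adj).Coalgebra ⥤ KarmObj Fl Fr,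
        (∀ Bc, (R.obj Bc).X = Fr.obj Bc.A ∧
          HEq (R.obj Bc).φ (adj.counit.app Bc.A ≫ Bc.a)) ∧
        (∀ (Bc Dc : (Adjunction.toComonad adj).Coalgebra) (g : Bc ⟶ Dc),
          HEq (R.map g).1 (Fr.map g.f))) :=
  coalgebras_to_karm_functor_general (coalgebraForgetRetract adj.toComonad)
end
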